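/- arXiv:2305.07567 — 2 statements merged into one kernel-verified Lean document; each statement's English description precedes it below -/
import Mathlib

section
/- Let W = (L, f) be a weighted lattice with L modular and complemented, let H be a coatom of L, and set g := f(⊤) − f(H). Let θ ∈ ℝ be such that θ^g > 0 and P(W/b; θ) ≥ 0 for every atom b of L with b ≰ H. If P(W; θ) > 0, then P(W|_H; θ) > 0. -/
/-- The characteristic polynomial of the minor `W([X,Y])` of the weighted lattice `W = (L, f)`,
evaluated at a real number `θ`:
`P(W([X,Y]); θ) = ∑_{A ∈ L, X ≤ A ≤ Y} μ(X,A) · θ^(f(Y) - f(A))`. -/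
noncomputable def charEval {L : Type*} [Lattice L] (μ : L → L → ℤ) (f : L → ℕ) (X Y : L)
    (θ : ℝ) : ℝ :=
  ∑ᶠ A ∈ Set.Icc X Y, (μ X A : ℝ) * θ ^ (f Y - f A)

open IncidenceAlgebra in
theorem aux_mu_eq {L : Type*} [Lattice L] [Finite L] [LocallyFiniteOrder L] [DecidableEq L]
    (μ : L → L → ℤ)
    (hμ_refl : ∀ x : L, μ x x = 1)
    (hμ_rec : ∀ x y : L, x < y → μ x y = -∑ᶠ z ∈ Set.Ico x y, μ x z) (x y : L) (hxy : x ≤ y) :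
    μ x y = mu ℤ x y := by
  induction y using WellFoundedLT.induction with
  | ind y ih =>
    rcases hxy.eq_or_lt with rfl | h
    · simp [hμ_refl]
    · rw [hμ_rec x y h, mu_eq_neg_sum_Ico_of_ne h.ne, ← Finset.coe_Ico, finsum_mem_coe_finset]
      congr 1
      refine Finset.sum_congr rfl fun z hz => ?_
      rw [Finset.mem_Ico] at hz
      exact ih z hz.2 hz.1

open IncidenceAlgebra in
/-- Weisner's theorem. -/
theorem aux_weisner {L : Type*} [Lattice L] [BoundedOrder L] [Fintype L] [LocallyFiniteOrder L]
    [DecidableEq L] (a A : L) (h : a < A) :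
    ∑ x : L, (if x ⊓ a = ⊥ then mu ℤ x A else 0) = 0 := by
  classical
  have h1 : ∀ x : L, (if x ⊓ a = ⊥ then mu ℤ x A else 0)
      = ∑ y : L, if y ≤ a then (if y ≤ x then mu ℤ ⊥ y * mu ℤ x A else 0) else 0 := by
    intro x
    have := sum_Icc_mu_right (𝕜 := ℤ) (⊥ : L) (x ⊓ a)
    have h2 : (if x ⊓ a = ⊥ then mu ℤ x A else 0)
        = (∑ y ∈ Finset.Icc ⊥ (x ⊓ a), mu ℤ ⊥ y) * mu ℤ x A := by
      rw [this]
      by_cases hx : x ⊓ a = ⊥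
      · simp [hx]
      · simp [hx, Ne.symm hx]
    rw [h2, Finset.sum_mul, ← Finset.sum_filter, ← Finset.sum_filter, Finset.filter_filter]
    refine Finset.sum_congr ?_ fun _ _ => rfl
    ext y
    simp [and_comm]
  rw [Finset.sum_congr rfl fun x _ => h1 x, Finset.sum_comm]
  refine Finset.sum_eq_zero fun y _ => ?_
  by_cases hy : y ≤ a
  · have h3 := sum_Icc_mu_left (𝕜 := ℤ) y A
    rw [if_neg (hy.trans_lt h).ne] at h3
    simp only [hy, if_true]
    have h4 : ∑ x : L, (if y ≤ x then mu ℤ ⊥ y * mu ℤ x A else 0)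
        = mu ℤ ⊥ y * ∑ x ∈ Finset.Icc y A, mu ℤ x A := by
      rw [Finset.mul_sum, ← Finset.sum_filter]
      symm
      apply Finset.sum_subset
      · intro x; simp; tauto
      · intro x hx hx'
        have : ¬ x ≤ A := by
          intro hxA; apply hx'; simp at hx; simp [hx, hxA]
        rw [apply_eq_zero_of_not_le this, mul_zero]
    rw [h4, h3, mul_zero]
  · simp [hy]

theorem aux_inf_bot {L : Type*} [Lattice L] [BoundedOrder L] [IsModularLattice L]
    (H : L) (hH : IsCoatom H) (x : L) : x ⊓ H = ⊥ ↔ x = ⊥ ∨ (IsAtom x ∧ ¬ x ≤ H) := by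
  constructor
  · intro h
    by_cases hx : x ≤ H
    · left; rwa [inf_eq_left.2 hx] at h
    · right
      refine ⟨?_, hx⟩
      have hs : H ⊔ x = ⊤ := hH.2 _ (left_lt_sup.2 hx)
      have hc : H ⋖ H ⊔ x := by rw [hs]; exact hH.covBy_top
      have := IsLowerModularLattice.inf_covBy_of_covBy_sup hc
      rw [inf_comm, h] at this
      exact bot_covBy_iff.1 this
  · rintro (rfl | ⟨h, h'⟩)
    · simp
    · exact (h.le_iff.1 inf_le_left).resolve_right fun e => h' (inf_eq_left.1 e)

open IncidenceAlgebra in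
theorem aux_char {L : Type*} [Lattice L] [Fintype L] [LocallyFiniteOrder L] [DecidableEq L]
    [DecidableLE L]
    (μ : L → L → ℤ) (f : L → ℕ)
    (hμ : ∀ x y : L, x ≤ y → μ x y = mu ℤ x y) (X Y : L) (θ : ℝ) :
    charEval μ f X Y θ = ∑ A : L, if A ≤ Y then (mu ℤ X A : ℝ) * θ ^ (f Y - f A) else 0 := by
  rw [charEval, ← Finset.coe_Icc, finsum_mem_coe_finset, ← Finset.sum_filter]
  rw [Finset.sum_congr rfl (g := fun A => (mu ℤ X A : ℝ) * θ ^ (f Y - f A))]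
  · apply Finset.sum_subset
    · intro x; simp
    · intro x hx hx'
      have : ¬ X ≤ x := by
        intro h; apply hx'; simp at hx; simp [hx, h]
      rw [apply_eq_zero_of_not_le this]; simp
  · intro x hx
    rw [hμ _ _ (Finset.mem_Icc.1 hx).1]

open IncidenceAlgebra in
/-- for a weighted lattice `W = (L, f)` with `L` a finite modular (relatively)
complemented lattice, `H` a coatom, `g = f ⊤ - f H`, and `θ : ℝ` with `θ^g > 0` and
`P(W/b; θ) ≥ 0` for every atom `b ≰ H`: if `P(W; θ) > 0` then `P(W|_H; θ) > 0`. -/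
theorem charEval_restriction_pos
    {L : Type*} [Lattice L] [BoundedOrder L] [Finite L] [IsModularLattice L]
    (hcompl : ∀ a b c : L, a ≤ c → c ≤ b → ∃ d : L, c ⊓ d = a ∧ c ⊔ d = b)
    (f : L → ℕ) (hf0 : f ⊥ = 0) (hfmono : Monotone f)
    (μ : L → L → ℤ)
    (hμ_refl : ∀ x : L, μ x x = 1)
    (hμ_rec : ∀ x y : L, x < y → μ x y = -∑ᶠ z ∈ Set.Ico x y, μ x z)
    (H : L) (hH : IsCoatom H)
    (θ : ℝ) (hθ : 0 < θ ^ (f ⊤ - f H))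
    (hatoms : ∀ b : L, IsAtom b → ¬ b ≤ H → 0 ≤ charEval μ f b ⊤ θ)
    (hpos : 0 < charEval μ f ⊥ ⊤ θ) :
    0 < charEval μ f ⊥ H θ := by
  classical
  haveI := Fintype.ofFinite L
  letI : LocallyFiniteOrder L := Fintype.toLocallyFiniteOrder
  have hμ := aux_mu_eq μ hμ_refl hμ_rec
  have key : ∀ A : L, ¬ A ≤ H →
      mu ℤ ⊥ A = - ∑ b : L, if IsAtom b ∧ ¬ b ≤ H then mu ℤ b A else 0 := by
    intro A hA
    have hw := aux_weisner (A ⊓ H) A (inf_lt_left.2 hA)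
    have h1 : ∀ x : L, (if x ⊓ (A ⊓ H) = ⊥ then mu ℤ x A else 0)
        = (if x = ⊥ then mu ℤ x A else 0)
          + (if IsAtom x ∧ ¬ x ≤ H then mu ℤ x A else 0) := by
      intro x
      by_cases hx : x ≤ A
      · rw [← inf_assoc, inf_eq_left.2 hx]
        simp only [aux_inf_bot H hH]
        by_cases hb : x = ⊥
        · subst hb; simp
        · simp [hb]
      · simp [apply_eq_zero_of_not_le hx]
    rw [Finset.sum_congr rfl fun x _ => h1 x, Finset.sum_add_distrib] at hw
    simp only [Finset.sum_ite_eq', Finset.mem_univ, if_true] at hw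
    linarith
  have ident : charEval μ f ⊥ ⊤ θ = θ ^ (f ⊤ - f H) * charEval μ f ⊥ H θ
      - ∑ b : L, if IsAtom b ∧ ¬ b ≤ H then charEval μ f b ⊤ θ else 0 := by
    have hs : (∑ b : L, if IsAtom b ∧ ¬ b ≤ H then charEval μ f b ⊤ θ else 0)
        = ∑ A : L, ((∑ b : L, if IsAtom b ∧ ¬ b ≤ H then mu ℤ b A else 0 : ℤ) : ℝ)
            * θ ^ (f ⊤ - f A) := by
      simp only [aux_char μ f hμ, le_top, if_true]
      simp only [Int.cast_sum, Finset.sum_mul]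
      rw [Finset.sum_comm]
      refine Finset.sum_congr rfl fun b _ => ?_
      by_cases hb : IsAtom b ∧ ¬ b ≤ H
      · simp [hb]
      · simp only [if_neg hb]; simp
    rw [hs, aux_char μ f hμ, aux_char μ f hμ, Finset.mul_sum, ← Finset.sum_sub_distrib]
    refine Finset.sum_congr rfl fun A _ => ?_
    by_cases hA : A ≤ H
    · have h0 : (∑ b : L, if IsAtom b ∧ ¬ b ≤ H then mu ℤ b A else 0) = 0 := by
        refine Finset.sum_eq_zero fun b _ => ?_
        split_ifs with hb
        · exact apply_eq_zero_of_not_le (fun h => hb.2 (h.trans hA)) _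
        · rfl
      have hexp : f ⊤ - f A = (f ⊤ - f H) + (f H - f A) := by
        have := hfmono hA
        have := hfmono (le_top : H ≤ ⊤)
        omega
      rw [h0, hexp, pow_add]
      simp [hA]
      ring
    · rw [key A hA]
      simp [hA]
  have hsum : 0 ≤ ∑ b : L, if IsAtom b ∧ ¬ b ≤ H then charEval μ f b ⊤ θ else 0 := by
    refine Finset.sum_nonneg fun b _ => ?_
    split_ifs with hb
    · exact hatoms b hb.1 hb.2
    · exact le_rfl
  have : 0 < θ ^ (f ⊤ - f H) * charEval μ f ⊥ H θ := by linarith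
  exact pos_of_mul_pos_right this hθ.le
end

section
/- Let C be a non-degenerate F_{q^m}-[n, k] rank-metric code and let M[C] be the q-matroid induced by C. Then crit(M[C]) = ⌈n/m⌉, where crit(M[C]) is the least positive integer t such that there exist codewords x_1, …, x_t ∈ C with supp(x_1) + ⋯ + supp(x_t) = F_q^n. -/
/-- The support of a vector `x ∈ K^n` over the subfield `F`: the `F`-subspace of `F^n`
consisting of all `(λ(x_1), …, λ(x_n))` for `λ ∈ Hom_F(K, F)`. -/
def vsupp (F : Type*) {K : Type*} [Field F] [Field K] [Algebra F K] {n : ℕ}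
    (x : Fin n → K) : Submodule F (Fin n → F) :=
  LinearMap.range
    ({ toFun := fun φ : K →ₗ[F] F => fun i => φ (x i)
       map_add' := by intro φ ψ; ext i; simp
       map_smul' := by intro c φ; ext i; simp } : (K →ₗ[F] F) →ₗ[F] (Fin n → F))

/-- pairing of `e ∈ F^n` with `x ∈ K^n`. -/
def pairK {F K : Type*} [Field F] [Field K] [Algebra F K] {n : ℕ} (e : Fin n → F) :
    (Fin n → K) →ₗ[K] K where
  toFun x := ∑ i, e i • x i
  map_add' x y := by simp [Finset.sum_add_distrib]
  map_smul' c x := by simp [Finset.mul_sum]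

theorem pairK_apply {F K : Type*} [Field F] [Field K] [Algebra F K] {n : ℕ} (e : Fin n → F)
    (x : Fin n → K) : pairK e x = ∑ i, e i • x i := rfl

theorem iSup_vsupp_eq_top_iff {F K : Type*} [Field F] [Field K] [Algebra F K] {n : ℕ}
    {ι : Type*} (x : ι → Fin n → K) :
    (⨆ i, vsupp F (x i)) = ⊤ ↔ ∀ e : Fin n → F, (∀ i, pairK e (x i) = 0) → e = 0 := by
  constructor
  · intro h e he
    let g : (Fin n → F) →ₗ[F] F := pairK (F := F) (K := F) e
    have hg : (⊤ : Submodule F (Fin n → F)) ≤ LinearMap.ker g := by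
      rw [← h]
      refine iSup_le fun i => ?_
      rintro _ ⟨φ, rfl⟩
      have := congrArg φ (he i)
      rw [pairK_apply, map_sum] at this
      simpa [g, pairK_apply] using this
    funext j
    have := hg (Submodule.mem_top (x := Pi.single j 1))
    simpa [g, pairK_apply, Pi.single_apply] using this
  · intro h
    by_contra hne
    obtain ⟨g, hg0, hg⟩ := Submodule.exists_le_ker_of_lt_top _ (lt_top_iff_ne_top.2 hne)
    have key : ∀ y : Fin n → F, g y = ∑ i, g (Pi.single i 1) * y i := by
      intro y
      conv_lhs => rw [pi_eq_sum_univ' y]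
      simp [mul_comm, Pi.single_apply]
    apply hg0
    have he := h (fun i => g (Pi.single i 1)) (fun i => by
      rw [← Module.forall_dual_apply_eq_zero_iff F]
      intro φ
      have : g (fun j => φ (x i j)) = 0 :=
        hg (le_iSup (fun i => vsupp F (x i)) i ⟨φ, rfl⟩)
      rw [key] at this
      simpa [pairK_apply] using this)
    ext y
    simp [congrFun he y]

theorem exists_reduce {F K : Type*} [Field F] [Fintype F] [Field K] [Fintype K] [Algebra F K]
    {n t : ℕ} (hnt : n ≤ t * Module.finrank F K) (d : ℕ) :
    ∀ D : Submodule K (Fin n → K), Module.finrank K D = d →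
      (∀ e : Fin n → F, (∀ x ∈ D, pairK e x = 0) → e = 0) →
      ∃ D' : Submodule K (Fin n → K), D' ≤ D ∧ Module.finrank K D' ≤ t ∧
        (∀ e : Fin n → F, (∀ x ∈ D', pairK e x = 0) → e = 0) := by
  induction d with
  | zero => intro D hD h; exact ⟨D, le_rfl, by omega, h⟩
  | succ d ih =>
    intro D hD h
    by_cases hdt : d + 1 ≤ t
    · exact ⟨D, le_rfl, by omega, h⟩
    let E : Kˣ × (Fin n → F) → Module.Dual K D :=
      fun p => (p.1 : K) • (pairK p.2).comp D.subtype
    have hE : ¬ Function.Surjective E := by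
      intro hs
      have h1 := Nat.card_le_card_of_surjective E hs
      rw [Nat.card_prod, Nat.card_units, Module.natCard_eq_pow_finrank (K := K) (V := Module.Dual K D),
        Subspace.dual_finrank_eq, hD, Nat.card_fun, Nat.card_fin] at h1
      have h2 : Nat.card F ^ n ≤ Nat.card K ^ d := by
        rw [Module.natCard_eq_pow_finrank (K := F) (V := K), ← pow_mul]
        refine Nat.pow_le_pow_right Nat.card_pos (hnt.trans ?_)
        rw [mul_comm]
        exact Nat.mul_le_mul_left _ (by omega)
      have h3 : 0 < Nat.card K := Nat.card_pos
      have h4 : 0 < Nat.card K ^ d := by positivity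
      have h5 : Nat.card K ^ (d+1) ≤ (Nat.card K - 1) * Nat.card K ^ d :=
        h1.trans (Nat.mul_le_mul_left _ h2)
      rw [pow_succ, mul_comm] at h5
      have := Nat.le_of_mul_le_mul_right h5 h4
      omega
    simp only [Function.Surjective, not_forall, not_exists] at hE
    obtain ⟨f, hf⟩ := hE
    have hf0 : f ≠ 0 := by
      rintro rfl
      apply hf (1, 0)
      ext x
      simp [E, pairK_apply]
    obtain ⟨x0, hx0⟩ : ∃ x0, f x0 ≠ 0 := by
      by_contra hc
      push Not at hc
      exact hf0 (LinearMap.ext hc)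
    have hr : Module.finrank K (LinearMap.ker f) = d := by
      have h1 := LinearMap.finrank_range_add_finrank_ker f
      rw [LinearMap.range_eq_top.2 (LinearMap.surjective hf0), finrank_top,
        Module.finrank_self, hD] at h1
      omega
    obtain ⟨D', hle, hfin, hD'⟩ := ih ((LinearMap.ker f).map D.subtype)
      (by rw [Submodule.finrank_map_subtype_eq, hr]) (by
        intro e he
        by_contra hne
        set g : Module.Dual K D := (pairK e).comp D.subtype with hgdef
        have hker : ∀ x, f x = 0 → g x = 0 := fun x hx =>
          he _ ⟨x, hx, rfl⟩
        have hgx : ∀ x, g x * f x0 = f x * g x0 := by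
          intro x
          have := hker (f x0 • x - f x • x0) (by simp [mul_comm])
          simp only [map_sub, map_smul, smul_eq_mul] at this
          linear_combination this
        have hg0 : g x0 ≠ 0 := by
          intro h0
          apply hne
          apply h
          intro x hx
          have := hgx ⟨x, hx⟩
          rw [h0, mul_zero] at this
          exact (mul_eq_zero.1 this).resolve_right hx0
        apply hf (Units.mk0 (f x0 / g x0) (div_ne_zero hx0 hg0), e)
        refine LinearMap.ext fun x => ?_
        change f x0 / g x0 * g x = f x
        field_simp
        linear_combination hgx x)
    exact ⟨D', hle.trans (Submodule.map_subtype_le _ _), hfin, hD'⟩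

theorem crit_eq_ceil_of_vector_code
    {F K : Type*} [Field F] [Fintype F] [Field K] [Fintype K] [Algebra F K]
    {n m k : ℕ} (hn : 0 < n) (hm : 0 < m) (hk : 0 < k)
    (hmK : Module.finrank F K = m)
    (C : Submodule K (Fin n → K)) (hC : Module.finrank K C = k)
    (hnondeg : (⨆ x : C, vsupp F (x : Fin n → K)) = ⊤) :
    sInf {t : ℕ | 0 < t ∧
        ∃ x : Fin t → C, (⨆ i, vsupp F ((x i : Fin n → K))) = ⊤}
      = (n + m - 1) / m := by
  rw [iSup_vsupp_eq_top_iff] at hnondeg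
  apply IsLeast.csInf_eq
  constructor
  · have htm : n ≤ (n + m - 1) / m * m := by
      have := Nat.lt_div_mul_add (a := n + m - 1) hm
      generalize (n + m - 1) / m * m = z at *
      omega
    set t := (n + m - 1) / m with ht
    refine ⟨Nat.div_pos (by omega) hm, ?_⟩
    obtain ⟨D, hDC, hDt, hD⟩ := exists_reduce (F := F) (t := t) (by rw [hmK]; exact htm) _ C rfl
      (fun e he => hnondeg e fun x => he x x.2)
    let b := Module.finBasis K D
    refine ⟨fun i => if h : (i : ℕ) < Module.finrank K D then
      ⟨b ⟨i, h⟩, hDC (b ⟨i, h⟩).2⟩ else 0, ?_⟩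
    rw [iSup_vsupp_eq_top_iff]
    intro e he
    apply hD
    intro x hx
    have : (pairK e).comp D.subtype = (0 : D →ₗ[K] K) := by
      apply b.ext
      intro i
      have := he ⟨i, i.2.trans_le hDt⟩
      simpa using this
    exact LinearMap.congr_fun this ⟨x, hx⟩
  · rintro t ⟨ht, x, hx⟩
    rw [iSup_vsupp_eq_top_iff] at hx
    let L : (Fin n → F) →ₗ[F] (Fin t → K) :=
      { toFun := fun e i => pairK e (x i : Fin n → K)
        map_add' := by intro a b; ext i; simp [pairK_apply, add_smul, Finset.sum_add_distrib]
        map_smul' := by intro a b; ext i; simp [pairK_apply, mul_smul, Finset.smul_sum] }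
    have hL : Function.Injective L := by
      rw [← LinearMap.ker_eq_bot, LinearMap.ker_eq_bot']
      intro e he
      exact hx e fun i => congrFun he i
    have := LinearMap.finrank_le_finrank_of_injective hL
    rw [Module.finrank_fin_fun, Module.finrank_pi_fintype] at this
    simp [hmK] at this
    rw [Nat.div_le_iff_le_mul_add_pred hm, mul_comm]
    omega
end
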